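/- arXiv:1805.09293 — 3 statements merged into one kernel-verified Lean document; each statement's English description precedes it below -/
import Mathlib

section
/- Let (X, 𝒜, ν) be a measure space and let p, q : X → ℝ be measurable functions with p x > 0 and q x > 0 for ν-almost every x. Let D : X → ℝ be measurable with 0 < D x < 1 for ν-almost every x. Assume the functions x ↦ p x * Real.log (D x) + q x * Real.log (1 - D x) and x ↦ p x * Real.log (p x / (p x + q x)) + q x * Real.log (q x / (p x + q x)) are ν-integrable. Then ∫ (p x * Real.log (D x) + q x * Real.log (1 - D x)) dν ≤ ∫ (p x * Real.log (p x / (p x + q x)) + q x * Real.log (q x / (p x + q x))) dν. -/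
open MeasureTheory

/-- Tangent-line bound for the logarithm, scaled by `a`. -/
lemma mul_log_le_mul_log_div_add {a s d : ℝ} (ha : 0 < a) (hs : 0 < s) (hd : 0 < d) :
    a * Real.log d ≤ a * Real.log (a / s) + (d * s - a) := by
  have h := mul_le_mul_of_nonneg_left
    (Real.log_le_sub_one_of_pos (div_pos hd (div_pos ha hs))) ha.le
  rw [Real.log_div hd.ne' (div_pos ha hs).ne'] at h
  have e : a * (d / (a / s) - 1) = d * s - a := by field_simp
  linarith

/-- The map `d ↦ a log d + b log (1 - d)` on `(0, 1)` is bounded by its value at `a / (a + b)`. -/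
lemma mul_log_add_mul_log_one_sub_le {a b d : ℝ} (ha : 0 < a) (hb : 0 < b)
    (hd₀ : 0 < d) (hd₁ : d < 1) :
    a * Real.log d + b * Real.log (1 - d) ≤
      a * Real.log (a / (a + b)) + b * Real.log (b / (a + b)) := by
  have h₁ := mul_log_le_mul_log_div_add ha (add_pos ha hb) hd₀
  have h₂ := mul_log_le_mul_log_div_add hb (add_pos ha hb) (sub_pos.mpr hd₁)
  linarith

theorem stmt_1 {X : Type*} [MeasurableSpace X] (ν : Measure X)
    (p q D : X → ℝ)
    (hp : Measurable p) (hq : Measurable q) (hD : Measurable D)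
    (hppos : ∀ᵐ x ∂ν, 0 < p x) (hqpos : ∀ᵐ x ∂ν, 0 < q x)
    (hDrange : ∀ᵐ x ∂ν, 0 < D x ∧ D x < 1)
    (hint1 : Integrable (fun x => p x * Real.log (D x) + q x * Real.log (1 - D x)) ν)
    (hint2 : Integrable (fun x =>
      p x * Real.log (p x / (p x + q x)) + q x * Real.log (q x / (p x + q x))) ν) :
    ∫ x, (p x * Real.log (D x) + q x * Real.log (1 - D x)) ∂ν ≤
      ∫ x, (p x * Real.log (p x / (p x + q x)) +
        q x * Real.log (q x / (p x + q x))) ∂ν := by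
  refine integral_mono_ae hint1 hint2 ?_
  filter_upwards [hppos, hqpos, hDrange] with x hpx hqx hDx
  exact mul_log_add_mul_log_one_sub_le hpx hqx hDx.1 hDx.2
end

section
/- Let 𝒳 be a nonempty subset of ℝⁿ, f : ℝⁿ → ℝ, and D : ℝⁿ → ℝ with 0 < D x ≤ 1 for all x ∈ 𝒳. Let x* ∈ 𝒳 minimize f over 𝒳 and let ε > 0. Suppose δ ∈ ℝ and x̃ ∈ 𝒳 satisfy: δ < Real.log (D x̃), δ ≤ Real.log (D x*), and x̃ minimizes the barrier objective g x = f x + λ * (δ - Real.log (D x)) over 𝒳, where λ = ε / (Real.log (D x̃) - δ). Then x̃ is ε-optimal for the original problem: f x̃ - ε ≤ f x* ≤ f x̃. -/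
theorem stmt_5 {n : ℕ} (𝒳 : Set (Fin n → ℝ)) (h𝒳 : 𝒳.Nonempty)
    (f D : (Fin n → ℝ) → ℝ)
    (hD : ∀ x ∈ 𝒳, 0 < D x ∧ D x ≤ 1)
    (xstar : Fin n → ℝ) (hxstar : xstar ∈ 𝒳)
    (hxstarmin : ∀ x ∈ 𝒳, f xstar ≤ f x)
    (ε : ℝ) (hε : 0 < ε)
    (δ : ℝ) (xt : Fin n → ℝ) (hxt : xt ∈ 𝒳)
    (hδt : δ < Real.log (D xt)) (hδs : δ ≤ Real.log (D xstar))
    (lam : ℝ) (hlam : lam = ε / (Real.log (D xt) - δ))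
    (hxtmin : ∀ x ∈ 𝒳, f xt + lam * (δ - Real.log (D xt)) ≤
      f x + lam * (δ - Real.log (D x))) :
    f xt - ε ≤ f xstar ∧ f xstar ≤ f xt := by
  have hgap : 0 < Real.log (D xt) - δ := sub_pos.mpr hδt
  have hlam_nonneg : 0 ≤ lam := hlam ▸ (div_pos hε hgap).le
  have hbarrier : lam * (Real.log (D xt) - δ) = ε := by
    rw [hlam, div_mul_cancel₀ _ hgap.ne']
  have hstar : 0 ≤ lam * (Real.log (D xstar) - δ) :=
    mul_nonneg hlam_nonneg (sub_nonneg.mpr hδs)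
  exact ⟨by linarith [hxtmin xstar hxstar], hxstarmin xt hxt⟩
end

section
/- Let 𝒳 = {x ∈ ℝ² | (-1 ≤ x₁ ∧ x₁ ≤ 17 ∧ 9 ≤ x₂ ∧ x₂ ≤ 17) ∨ (9 ≤ x₁ ∧ x₁ ≤ 17 ∧ -1 ≤ x₂ ∧ x₂ ≤ 9)}. The set of minimizers of the bilinear objective f(x) = x₁ * x₂ - 4 * x₁ - 4 * x₂ over 𝒳 is exactly the two-point set {(-1, 17), (17, -1)}, and the minimum value is -81. -/
theorem neg_eightyOne_le_bilinear {a b : ℝ} (ha : -1 ≤ a) (hb : 9 ≤ b) (hb' : b ≤ 17) :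
    -81 ≤ a * b - 4 * a - 4 * b := by
  nlinarith [mul_nonneg (sub_nonneg.2 ha) (sub_nonneg.2 hb)]

theorem eq_of_bilinear_le_neg_eightyOne {a b : ℝ} (ha : -1 ≤ a) (hb : 9 ≤ b) (hb' : b ≤ 17)
    (h : a * b - 4 * a - 4 * b ≤ -81) : a = -1 ∧ b = 17 := by
  have hab := mul_nonneg (sub_nonneg.2 ha) (sub_nonneg.2 hb)
  constructor <;> nlinarith

theorem stmt_11 :
    let 𝒳 : Set (ℝ × ℝ) := {x | (-1 ≤ x.1 ∧ x.1 ≤ 17 ∧ 9 ≤ x.2 ∧ x.2 ≤ 17) ∨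
      (9 ≤ x.1 ∧ x.1 ≤ 17 ∧ -1 ≤ x.2 ∧ x.2 ≤ 9)}
    let f : ℝ × ℝ → ℝ := fun x => x.1 * x.2 - 4 * x.1 - 4 * x.2
    {x ∈ 𝒳 | ∀ y ∈ 𝒳, f x ≤ f y} =
      ({((-1 : ℝ), (17 : ℝ)), ((17 : ℝ), (-1 : ℝ))} : Set (ℝ × ℝ)) ∧
    IsLeast (f '' 𝒳) (-81) := by
  intro 𝒳 f
  have lower_bound : ∀ y ∈ 𝒳, -81 ≤ f y := by
    rintro ⟨a, b⟩ (⟨ha, -, hb, hb'⟩ | ⟨ha, ha', hb, -⟩)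
    · exact neg_eightyOne_le_bilinear ha hb hb'
    · have := neg_eightyOne_le_bilinear hb ha ha'
      simp only [f] at this ⊢
      linarith
  have left_mem : ((-1, 17) : ℝ × ℝ) ∈ 𝒳 := by left; norm_num
  have right_mem : ((17, -1) : ℝ × ℝ) ∈ 𝒳 := by right; norm_num
  have left_value : f (-1, 17) = -81 := by norm_num [f]
  have right_value : f (17, -1) = -81 := by norm_num [f]
  refine ⟨Set.Subset.antisymm ?_ ?_, ⟨_, left_mem, left_value⟩, ?_⟩
  · rintro ⟨a, b⟩ ⟨hx, hmin⟩
    have h : a * b - 4 * a - 4 * b ≤ -81 := (hmin _ left_mem).trans_eq left_value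
    rcases hx with ⟨ha, -, hb, hb'⟩ | ⟨ha, ha', hb, -⟩
    · obtain ⟨rfl, rfl⟩ := eq_of_bilinear_le_neg_eightyOne ha hb hb' h
      exact Or.inl rfl
    · obtain ⟨rfl, rfl⟩ := eq_of_bilinear_le_neg_eightyOne hb ha ha' (by linarith)
      exact Or.inr rfl
  · rintro x (rfl | rfl)
    · exact ⟨left_mem, fun y hy => left_value.trans_le (lower_bound y hy)⟩
    · exact ⟨right_mem, fun y hy => right_value.trans_le (lower_bound y hy)⟩
  · rintro _ ⟨y, hy, rfl⟩
    exact lower_bound y hy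
end
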